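/- Every finite simple connected loopless graph G that is resistance nonnegative (RN) has a matching of size ⌊|V|/2⌋, i.e. a perfect matching if |V| is even and a near-perfect matching (covering all but one vertex) if |V| is odd. -/

import Mathlib

open scoped Classical

namespace RCurv

variable {V : Type*} [Fintype V] [DecidableEq V]

/-- `T` is (the edge set of) a spanning tree of `G`. -/
def IsSpanningTree (G : SimpleGraph V) (T : Finset (Sym2 V)) : Prop :=
  (T : Set (Sym2 V)) ⊆ G.edgeSet ∧ (SimpleGraph.fromEdgeSet (T : Set (Sym2 V))).IsTree

/-- The finite set of all spanning trees of `G`. -/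
noncomputable def spanningTrees (G : SimpleGraph V) : Finset (Finset (Sym2 V)) :=
  Finset.univ.filter fun T => IsSpanningTree G T

/-- The relative resistance `r_e(c)` of an edge `e`. -/
noncomputable def relRes (G : SimpleGraph V) (c : Sym2 V → ℝ) (e : Sym2 V) : ℝ :=
  (∑ T ∈ (spanningTrees G).filter (fun T => e ∈ T), ∏ t ∈ T, c t) /
    (∑ T ∈ spanningTrees G, ∏ t ∈ T, c t)

/-- The resistance curvature `p_v(c)` of a vertex `v`. -/
noncomputable def curv (G : SimpleGraph V) (c : Sym2 V → ℝ) (v : V) : ℝ :=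
  1 - (1 / 2) * ∑ u ∈ G.neighborFinset v, relRes G c s(u, v)

/-- `G` is resistance nonnegative. -/
def IsRN (G : SimpleGraph V) : Prop :=
  ∃ c : Sym2 V → ℝ, (∀ e ∈ G.edgeSet, 0 < c e) ∧ ∀ v : V, 0 ≤ curv G c v

/-- `G` is resistance positive. -/
def IsRP (G : SimpleGraph V) : Prop :=
  ∃ c : Sym2 V → ℝ, (∀ e ∈ G.edgeSet, 0 < c e) ∧ ∀ v : V, 0 < curv G c v

/-- The indicator vector of a finite edge set, as a vector in `ℝ^{Sym2 V}`. -/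
noncomputable def indVec (T : Finset (Sym2 V)) : Sym2 V → ℝ := fun e => if e ∈ T then 1 else 0

/-- The spanning tree polytope `P(G)`. -/
noncomputable def stPolytope (G : SimpleGraph V) : Set (Sym2 V → ℝ) :=
  convexHull ℝ {x | ∃ T ∈ spanningTrees G, x = indVec T}

/-- `M` is a matching of `G`. -/
def IsMatching' (G : SimpleGraph V) (M : Finset (Sym2 V)) : Prop :=
  (M : Set (Sym2 V)) ⊆ G.edgeSet ∧ ∀ v : V, (M.filter fun e => v ∈ e).card ≤ 1

/-- The matching polytope `M(G)`. -/
noncomputable def matchingPolytope (G : SimpleGraph V) : Set (Sym2 V → ℝ) :=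
  convexHull ℝ {x | ∃ M : Finset (Sym2 V), IsMatching' G M ∧ x = indVec M}

/-- A Hamiltonian path: a spanning tree in which every vertex has degree at most `2`. -/
def IsHamPath (G : SimpleGraph V) (H : Finset (Sym2 V)) : Prop :=
  IsSpanningTree G H ∧ ∀ v : V, (H.filter fun e => v ∈ e).card ≤ 2

end RCurv

/-!
The relative resistances are the edge probabilities of a random spanning tree, so they form a point
of the spanning tree polytope, and nonnegative curvature says that the expected tree degree of every
vertex is at most `2`. Hence for each vertex set `S` some spanning tree has degrees summing to at
most `2 * #S` over `S`; deleting `S` from this tree, and a fortiori from the graph, leaves at most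
`#S + 1` components. Berge's deficiency version of Tutte's theorem then gives a matching that misses
at most one vertex.
-/

namespace RCurv

open Finset SimpleGraph

section ComponentCount

variable {V W : Type*} {G : SimpleGraph V}

theorem card_le_card_add_one_of_surjective (hG : G.Connected) (F : Finset (Sym2 V)) {f : V → W}
    (hf : Function.Surjective f) (hF : ∀ u v, G.Adj u v → s(u, v) ∉ F → f u = f v) :
    Nat.card W ≤ #F + 1 := by
  set E : Finset (Sym2 W) := F.image (Sym2.map f)
  set H : SimpleGraph W := fromEdgeSet E
  have hadj (u v : V) (huv : G.Adj u v) : H.Reachable (f u) (f v) := by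
    by_cases hfuv : f u = f v
    · rw [hfuv]
    · have hmem : s(u, v) ∈ F := by_contra fun h => hfuv (hF u v huv h)
      exact ((fromEdgeSet_adj _).2 ⟨mem_coe.2 (mem_image_of_mem (Sym2.map f) hmem), hfuv⟩).reachable
  have hwalk (u v : V) (p : G.Walk u v) : H.Reachable (f u) (f v) := by
    induction p with
    | nil => rfl
    | cons h _ ih => exact (hadj _ _ h).trans ih
  have hH : H.Connected := by
    have := hG.nonempty.map f
    refine ⟨hf.forall₂.2 fun u v => ?_⟩
    exact (hG.preconnected u v).elim (hwalk u v)
  have hcard : Nat.card H.edgeSet ≤ #F := calc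
    Nat.card H.edgeSet ≤ (E : Set (Sym2 W)).ncard :=
      Set.ncard_le_ncard (by simp [H, edgeSet_fromEdgeSet]) E.finite_toSet
    _ = #E := Set.ncard_coe_finset E
    _ ≤ #F := card_image_le
  exact hH.card_vert_le_card_edgeSet_add_one.trans (by lia)

theorem card_add_card_connectedComponent_induce_compl_le [Finite V] [G.LocallyFinite]
    (hG : G.Connected) (S : Finset V) :
    #S + Nat.card (G.induce (S : Set V)ᶜ).ConnectedComponent ≤ ∑ v ∈ S, G.degree v + 1 := by
  set K := G.induce (S : Set V)ᶜ
  let f (v : V) : S ⊕ K.ConnectedComponent :=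
    if hv : v ∈ S then .inl ⟨v, hv⟩ else .inr (K.connectedComponentMk ⟨v, hv⟩)
  have hf : Function.Surjective f := by
    rintro (⟨v, hv⟩ | c)
    · exact ⟨v, by simp [f, hv]⟩
    · induction c using ConnectedComponent.ind with
      | h v =>
        have hv : (v : V) ∉ S := v.2
        exact ⟨v, by simp [f, hv]⟩
  have hconst (u v : V) (huv : G.Adj u v) (hS : s(u, v) ∉ S.biUnion (G.incidenceFinset ·)) :
      f u = f v := by
    have hu : u ∉ S := fun h => hS <| mem_biUnion.2 ⟨u, h, by simpa [incidenceSet] using huv⟩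
    have hv : v ∉ S := fun h => hS <| mem_biUnion.2 ⟨v, h, by simpa [incidenceSet] using huv⟩
    have hK : K.Adj ⟨u, hu⟩ ⟨v, hv⟩ := huv
    simp only [f, hu, hv, dite_false, ConnectedComponent.sound hK.reachable]
  calc
    _ = Nat.card (S ⊕ K.ConnectedComponent) := by simp [Nat.card_sum]
    _ ≤ #(S.biUnion (G.incidenceFinset ·)) + 1 := card_le_card_add_one_of_surjective hG _ hf hconst
    _ ≤ ∑ v ∈ S, G.degree v + 1 := by
      gcongr
      exact card_biUnion_le.trans_eq (sum_congr rfl fun v _ => G.card_incidenceFinset_eq_degree v)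

end ComponentCount

section SpanningTreePolytope

variable {V : Type*} [Fintype V] {G : SimpleGraph V}

theorem mem_spanningTrees {T : Finset (Sym2 V)} : T ∈ spanningTrees G ↔ IsSpanningTree G T := by
  simp [spanningTrees]

theorem spanningTrees_nonempty (hG : G.Connected) : (spanningTrees G).Nonempty := by
  obtain ⟨T, hTG, hT⟩ := hG.exists_isTree_le
  refine ⟨T.edgeFinset, mem_spanningTrees.2 ⟨?_, ?_⟩⟩
  · simpa using hTG
  · simpa using hT

theorem sum_prod_spanningTrees_pos (hG : G.Connected) {c : Sym2 V → ℝ}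
    (hc : ∀ e ∈ G.edgeSet, 0 < c e) : 0 < ∑ T ∈ spanningTrees G, ∏ t ∈ T, c t :=
  sum_pos (fun _ hT => prod_pos fun t ht => hc t ((mem_spanningTrees.1 hT).1 ht))
    (spanningTrees_nonempty hG)

variable [DecidableEq V]

theorem relRes_mem_stPolytope {c : Sym2 V → ℝ} (hc : ∀ e ∈ G.edgeSet, 0 ≤ c e)
    (hZ : 0 < ∑ T ∈ spanningTrees G, ∏ t ∈ T, c t) : relRes G c ∈ stPolytope G := by
  have hcenter : relRes G c = (spanningTrees G).centerMass (fun T => ∏ t ∈ T, c t) indVec := by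
    ext e
    simp [relRes, centerMass, indVec, sum_filter, div_eq_inv_mul]
  rw [hcenter]
  exact centerMass_mem_convexHull _
    (fun T hT => prod_nonneg fun t ht => hc t ((mem_spanningTrees.1 hT).1 ht)) hZ
    fun T hT => ⟨T, hT, rfl⟩

theorem sum_neighborFinset_indVec {T : Finset (Sym2 V)} (hT : (T : Set (Sym2 V)) ⊆ G.edgeSet)
    (v : V) :
    ∑ u ∈ G.neighborFinset v, indVec T s(u, v) =
      (fromEdgeSet (T : Set (Sym2 V))).degree v := by
  have hfilter : {u ∈ G.neighborFinset v | s(u, v) ∈ T} =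
      (fromEdgeSet (T : Set (Sym2 V))).neighborFinset v := by
    ext u
    have hadj : s(u, v) ∈ T → G.Adj v u := fun h => (hT h).symm
    simp only [mem_filter, mem_neighborFinset, fromEdgeSet_adj, mem_coe, Sym2.eq_swap (a := v)]
    exact ⟨fun h => ⟨h.2, h.1.ne⟩, fun h => ⟨hadj h.1, h.1⟩⟩
  simp only [indVec, sum_boole, hfilter, card_neighborFinset_eq_degree]

theorem exists_spanningTree_sum_degree_le {x : Sym2 V → ℝ} (hx : x ∈ stPolytope G)
    (S : Finset V) :
    ∃ T ∈ spanningTrees G, ((∑ v ∈ S, (fromEdgeSet (T : Set (Sym2 V))).degree v : ℕ) : ℝ) ≤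
      ∑ v ∈ S, ∑ u ∈ G.neighborFinset v, x s(u, v) := by
  let φ : (Sym2 V → ℝ) →ₗ[ℝ] ℝ := ∑ v ∈ S, ∑ u ∈ G.neighborFinset v, LinearMap.proj s(u, v)
  have hφ (y : Sym2 V → ℝ) : φ y = ∑ v ∈ S, ∑ u ∈ G.neighborFinset v, y s(u, v) := by simp [φ]
  obtain ⟨_, ⟨T, hT, rfl⟩, hle⟩ :=
    (φ.concaveOn convex_univ).exists_le_of_mem_convexHull (Set.subset_univ _) hx
  refine ⟨T, hT, ?_⟩
  simpa only [hφ, sum_neighborFinset_indVec (mem_spanningTrees.1 hT).1, ← Nat.cast_sum] using hle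

theorem card_connectedComponent_induce_compl_le {x : Sym2 V → ℝ} (hx : x ∈ stPolytope G)
    (hdeg : ∀ v, ∑ u ∈ G.neighborFinset v, x s(u, v) ≤ 2) (S : Finset V) :
    Nat.card (G.induce (S : Set V)ᶜ).ConnectedComponent ≤ #S + 1 := by
  obtain ⟨T, hT, hTdeg⟩ := exists_spanningTree_sum_degree_le hx S
  obtain ⟨hTG, hTtree⟩ := mem_spanningTrees.1 hT
  set H := fromEdgeSet (T : Set (Sym2 V))
  have hHG : H ≤ G := fun u v huv => hTG ((fromEdgeSet_adj _).1 huv).1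
  have hsum : ∑ v ∈ S, H.degree v ≤ 2 * #S := by
    have : ∑ v ∈ S, ∑ u ∈ G.neighborFinset v, x s(u, v) ≤ #S • 2 :=
      sum_le_card_nsmul S _ 2 fun v _ => hdeg v
    rify
    simpa [mul_comm] using hTdeg.trans this
  have hHcount := card_add_card_connectedComponent_induce_compl_le hTtree.connected S
  have hinduce : H.induce (S : Set V)ᶜ ≤ G.induce (S : Set V)ᶜ := comap_monotone _ hHG
  have hGcount := ConnectedComponent.card_le_card_of_le hinduce
  lia

theorem curv_nonneg_iff {c : Sym2 V → ℝ} {v : V} :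
    0 ≤ curv G c v ↔ ∑ u ∈ G.neighborFinset v, relRes G c s(u, v) ≤ 2 := by
  rw [curv]
  constructor <;> intro h <;> linarith

theorem IsRN.exists_mem_stPolytope_sum_le_two (hRN : IsRN G) (hG : G.Connected) :
    ∃ x ∈ stPolytope G, ∀ v, ∑ u ∈ G.neighborFinset v, x s(u, v) ≤ 2 := by
  obtain ⟨c, hc, hcurv⟩ := hRN
  have hx : relRes G c ∈ stPolytope G :=
    relRes_mem_stPolytope (fun e he => (hc e he).le) (sum_prod_spanningTrees_pos hG hc)
  exact ⟨relRes G c, hx, fun v => curv_nonneg_iff.1 (hcurv v)⟩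

end SpanningTreePolytope

section Deficiency

variable {V W : Type*} {G : SimpleGraph V}

/-- The join of `G` with the complete graph on `W`: every vertex in `W` is made adjacent to all
other vertices. Tutte's theorem for this graph yields Berge's deficiency version for `G`. Phrased
through complements, where a join becomes a disjoint sum. -/
def addUniversal (G : SimpleGraph V) (W : Type*) : SimpleGraph (V ⊕ W) :=
  (Gᶜ ⊕g (⊥ : SimpleGraph W))ᶜ

theorem addUniversal_adj_inl {u v : V} :
    (addUniversal G W).Adj (.inl u) (.inl v) ↔ G.Adj u v := by
  have : G.Adj u v → u ≠ v := Adj.ne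
  simp only [addUniversal, compl_adj, sum_adj_inl, ne_eq, Sum.inl.injEq]
  tauto

theorem isUniversal_inr_addUniversal (w : W) : (addUniversal G W).IsUniversal (.inr w) := by
  rintro (v | w') hne <;> simp_all [addUniversal]

/-- When `U` contains all of `W`, deleting `U` from the join leaves the graph obtained from `G` by
deleting the vertices of `U` in `V`. -/
noncomputable def deleteVertsAddUniversalIso (G : SimpleGraph V) {U : Set (V ⊕ W)}
    (hU : Set.range Sum.inr ⊆ U) :
    G.induce (Sum.inl ⁻¹' U)ᶜ ≃g ((⊤ : (addUniversal G W).Subgraph).deleteVerts U).coe where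
  toEquiv := Equiv.ofBijective (fun v => ⟨.inl v, trivial, v.2⟩) <| by
    refine ⟨fun u v h => by simpa [Subtype.ext_iff] using h, ?_⟩
    rintro ⟨v | w, hv⟩
    · exact ⟨⟨v, hv.2⟩, rfl⟩
    · exact absurd (hU ⟨w, rfl⟩) hv.2
  map_rel_iff' {u v} := by
    have hadj : (addUniversal G W).Adj (.inl u.1) (.inl v.1) ↔ G.Adj u v := addUniversal_adj_inl
    exact Subgraph.deleteVerts_adj.trans
      ⟨fun h => hadj.1 h.2.2.2.2, fun h => ⟨trivial, u.2, trivial, v.2, hadj.2 h⟩⟩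

theorem ncard_oddComponents_eq_of_iso {H : SimpleGraph W} (φ : G ≃g H) :
    G.oddComponents.ncard = H.oddComponents.ncard := by
  refine Nat.card_congr (φ.connectedComponentEquiv.subtypeEquiv fun C => ?_)
  have : C.supp.ncard = (φ.connectedComponentEquiv C).supp.ncard :=
    Nat.card_congr (C.isoEquivSupp φ)
  simp only [Set.mem_ofPred_eq, this]

theorem ncard_preimage_inl_add_card [Finite V] [Finite W] {U : Set (V ⊕ W)}
    (hU : Set.range Sum.inr ⊆ U) : (Sum.inl ⁻¹' U : Set V).ncard + Nat.card W = U.ncard := by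
  have hsum : Nat.card U = _ := (Nat.card_congr Equiv.subtypeSum).trans Nat.card_sum
  rw [← Nat.card_coe_set_eq U, hsum,
    Nat.card_congr (Equiv.subtypeUnivEquiv fun w => hU ⟨w, rfl⟩)]
  rfl

theorem exists_isPerfectMatching_addUniversal [Finite V] [Finite W]
    (heven : Even (Nat.card V + Nat.card W))
    (hodd : ∀ S : Set V, (G.induce Sᶜ).oddComponents.ncard ≤ S.ncard + Nat.card W) :
    ∃ P : (addUniversal G W).Subgraph, P.IsPerfectMatching := by
  refine tutte.2 fun U hU => ?_
  rw [IsTutteViolator] at hU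
  by_cases hW : Set.range Sum.inr ⊆ U
  · rw [← ncard_oddComponents_eq_of_iso (deleteVertsAddUniversalIso G hW),
      ← ncard_preimage_inl_add_card hW] at hU
    exact (hodd _).not_gt hU
  · obtain ⟨_, ⟨w, rfl⟩, hw⟩ := Set.not_subset.1 hW
    set K := ((⊤ : (addUniversal G W).Subgraph).deleteVerts U).coe
    have hK : K.Connected := by
      refine Connected.of_isUniversal (v := ⟨.inr w, by simpa using hw⟩) fun v hv => ?_
      have hvU : v.1 ∉ U := v.2.2
      have hadj : (addUniversal G W).Adj (.inr w) v :=
        isUniversal_inr_addUniversal w fun h => hv (Subtype.ext h)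
      simp [K, hw, hvU, hadj]
    have := hK.preconnected.subsingleton_connectedComponent
    have hle : K.oddComponents.ncard ≤ 1 := Set.ncard_le_one_of_subsingleton _
    have hU0 : U = ∅ := by
      rw [← Set.ncard_eq_zero]
      lia
    have hKodd : Odd K.oddComponents.ncard := by
      rw [show K.oddComponents.ncard = 1 by lia]
      exact odd_one
    rw [odd_ncard_oddComponents] at hKodd
    refine Nat.not_odd_iff_even.2 heven ?_
    simpa [hU0, Nat.card_sum] using hKodd

end Deficiency

section Matching

variable {V W : Type*} [DecidableEq V] [DecidableEq W] {G : SimpleGraph V}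

theorem exists_finset_of_isPerfectMatching [Finite V] {P : G.Subgraph} (hP : P.IsPerfectMatching) :
    ∃ M : Finset (Sym2 V), (M : Set (Sym2 V)) ⊆ G.edgeSet ∧ ∀ v, #{e ∈ M | v ∈ e} = 1 := by
  refine ⟨P.edgeSet.toFinite.toFinset, by simpa using P.edgeSet_subset, fun v => ?_⟩
  obtain ⟨w, hvw, hw⟩ := Subgraph.isPerfectMatching_iff.1 hP v
  refine card_eq_one.2 ⟨s(v, w), ?_⟩
  ext e
  simp only [mem_filter, Set.Finite.mem_toFinset, mem_singleton]
  constructor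
  · rintro ⟨he, u, rfl⟩
    rw [hw u he]
  · rintro rfl
    exact ⟨hvw, Sym2.mem_mk_left v w⟩

theorem sum_card_filter_mem [Fintype V] {M : Finset (Sym2 V)}
    (hM : (M : Set (Sym2 V)) ⊆ G.edgeSet) :
    ∑ v, #{e ∈ M | v ∈ e} = 2 * #M := calc
  _ = ∑ e ∈ M, #{v | v ∈ e} := sum_card_bipartiteAbove_eq_sum_card_bipartiteBelow _
  _ = ∑ e ∈ M, 2 := sum_congr rfl fun e he => by
    rw [← Sym2.card_toFinset_of_not_isDiag e (G.not_isDiag_of_mem_edgeSet (hM he))]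
    congr 1
    ext v
    simp
  _ = 2 * #M := by simp [mul_comm]

theorem IsMatching'.preimage {H : SimpleGraph W} (φ : G ↪g H) {P : Finset (Sym2 W)}
    (hP : IsMatching' H P) :
    IsMatching' G (P.preimage (Sym2.map φ) (Sym2.map.injective φ.injective).injOn) := by
  refine ⟨fun e he => ?_, fun v => ?_⟩
  · exact φ.map_mem_edgeSet_iff.1 (hP.1 (mem_preimage.1 he))
  · refine le_trans ?_ (hP.2 (φ v))
    refine card_le_card_of_injOn (Sym2.map φ) (fun e he => ?_)
      (Sym2.map.injective φ.injective).injOn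
    obtain ⟨heP, hve⟩ := mem_filter.1 he
    exact mem_filter.2 ⟨mem_preimage.1 heP, Sym2.mem_map.2 ⟨v, hve, rfl⟩⟩

theorem card_le_card_preimage_inl_add [Fintype W] {P : Finset (Sym2 (V ⊕ W))}
    (hP : ∀ w : W, #{e ∈ P | .inr w ∈ e} ≤ 1) :
    #P ≤ #(P.preimage (Sym2.map .inl) (Sym2.map.injective Sum.inl_injective).injOn) +
      Fintype.card W := by
  set M := P.preimage (Sym2.map Sum.inl) (Sym2.map.injective Sum.inl_injective).injOn
  have hcover : P ⊆ M.image (Sym2.map .inl) ∪ univ.biUnion fun w => {e ∈ P | .inr w ∈ e} := by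
    intro e he
    induction e with | _ a b
    rcases a with a | w
    · rcases b with b | w
      · exact mem_union_left _ (mem_image.2 ⟨s(a, b), mem_preimage.2 he, rfl⟩)
      · have hw : .inr w ∈ s(Sum.inl a, Sum.inr w) := Sym2.mem_mk_right _ _
        exact mem_union_right _ (mem_biUnion.2 ⟨w, mem_univ w, mem_filter.2 ⟨he, hw⟩⟩)
    · have hw : .inr w ∈ s(Sum.inr w, b) := Sym2.mem_mk_left _ _
      exact mem_union_right _ (mem_biUnion.2 ⟨w, mem_univ w, mem_filter.2 ⟨he, hw⟩⟩)
  calc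
    #P ≤ #(M.image (Sym2.map Sum.inl)) + #(univ.biUnion fun w => {e ∈ P | .inr w ∈ e}) :=
      (card_le_card hcover).trans (card_union_le _ _)
    _ ≤ #M + ∑ w, #{e ∈ P | .inr w ∈ e} := add_le_add card_image_le card_biUnion_le
    _ ≤ #M + Fintype.card W := by
      gcongr
      simpa using sum_le_card_nsmul univ _ 1 fun w _ => hP w

variable [Fintype V]

theorem IsMatching'.two_mul_card_le {M : Finset (Sym2 V)} (hM : IsMatching' G M) :
    2 * #M ≤ Fintype.card V := by
  rw [← sum_card_filter_mem hM.1]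
  simpa using sum_le_card_nsmul univ _ 1 fun v _ => hM.2 v

theorem exists_isMatching'_card_le_of_even {d : ℕ} (heven : Even (Nat.card V + d))
    (hodd : ∀ S : Set V, (G.induce Sᶜ).oddComponents.ncard ≤ S.ncard + d) :
    ∃ M, IsMatching' G M ∧ Fintype.card V ≤ 2 * #M + d := by
  obtain ⟨P, hP⟩ := exists_isPerfectMatching_addUniversal (G := G) (W := Fin d)
    (by simpa using heven) (by simpa using hodd)
  obtain ⟨P', hP'G, hP'⟩ := exists_finset_of_isPerfectMatching hP
  let φ : G ↪g addUniversal G (Fin d) := ⟨.inl, addUniversal_adj_inl⟩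
  have hPmatching : IsMatching' _ P' := ⟨hP'G, fun v => (hP' v).le⟩
  refine ⟨_, hPmatching.preimage φ, ?_⟩
  have hP'card : Fintype.card V + d = 2 * #P' := by
    simpa [hP'] using sum_card_filter_mem hP'G
  have hle : #P' ≤ #(P'.preimage (Sym2.map φ) _) + Fintype.card (Fin d) :=
    card_le_card_preimage_inl_add fun w => (hP' (.inr w)).le
  rw [Fintype.card_fin] at hle
  lia

theorem exists_isMatching'_card_le {d : ℕ}
    (hodd : ∀ S : Set V, (G.induce Sᶜ).oddComponents.ncard ≤ S.ncard + d) :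
    ∃ M, IsMatching' G M ∧ Fintype.card V ≤ 2 * #M + d := by
  by_cases heven : Even (Nat.card V + d)
  · exact exists_isMatching'_card_le_of_even heven hodd
  -- The number of odd components of `G - S` has the parity of `|V| - |S|`, so equality in `hodd`
  -- would make `|V| + d` even.
  have hlt (S : Set V) : (G.induce Sᶜ).oddComponents.ncard < S.ncard + d := by
    refine (hodd S).lt_of_ne fun heq => heven ?_
    have hparity := odd_ncard_oddComponents (G := G.induce Sᶜ)
    have hcompl := S.ncard_add_ncard_compl
    rw [heq, Nat.card_coe_set_eq] at hparity
    grind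
  have hd : 0 < d := by simpa using (Nat.zero_le _).trans_lt (hlt ∅)
  obtain ⟨M, hM, hcard⟩ := exists_isMatching'_card_le_of_even (G := G) (d := d - 1)
    (by grind) fun S => by grind
  exact ⟨M, hM, by lia⟩

end Matching

end RCurv

open RCurv in
theorem isRN_exists_nearPerfect_matching_general {V : Type*} [Fintype V] [DecidableEq V]
    (G : SimpleGraph V) {x : Sym2 V → ℝ} (hx : x ∈ stPolytope G)
    (hdeg : ∀ v, ∑ u ∈ G.neighborFinset v, x s(u, v) ≤ 2) :
    ∃ M : Finset (Sym2 V), IsMatching' G M ∧ M.card = Fintype.card V / 2 := by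
  have hodd (S : Set V) : (G.induce Sᶜ).oddComponents.ncard ≤ S.ncard + 1 := calc
    (G.induce Sᶜ).oddComponents.ncard ≤ Nat.card (G.induce Sᶜ).ConnectedComponent :=
      Set.ncard_le_card _
    _ ≤ S.ncard + 1 := by
      obtain ⟨S, rfl⟩ := S.toFinite.exists_finset_coe
      simpa only [Set.ncard_coe_finset] using card_connectedComponent_induce_compl_le hx hdeg S
  obtain ⟨M, hM, hcard⟩ := exists_isMatching'_card_le hodd
  have := hM.two_mul_card_le
  exact ⟨M, hM, by lia⟩

open RCurv in
/-- Every resistance nonnegative graph has a matching of size `⌊|V|/2⌋`, i.e. a perfect or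
near-perfect matching. -/
theorem isRN_exists_nearPerfect_matching {V : Type*} [Fintype V] [DecidableEq V]
    (G : SimpleGraph V) (hG : G.Connected) (hRN : IsRN G) :
    ∃ M : Finset (Sym2 V), IsMatching' G M ∧ M.card = Fintype.card V / 2 := by
  obtain ⟨x, hx, hdeg⟩ := hRN.exists_mem_stPolytope_sum_le_two hG
  exact isRN_exists_nearPerfect_matching_general G hx hdeg
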